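/- The complementation map * defined by (M*)_K = M_{K^c}, where K^c = [1,n+1] ∖ K, sends every w₀-BZ datum to an e-BZ datum, and it gives a bijection from BZ^{w₀} onto BZ^e whose inverse is given by the same formula (M^e ↦ (K ↦ M^e_{K^c})). -/

import Mathlib

/-- A BZ datum of type `A_n`: a collection of integers `M = (M_K)` indexed by Maya diagrams
`K ⊆ [1,n+1]` (modeled as a total function on `Finset ℕ`, with the conventions
`M_∅ = M_{[1,n+1]} = 0`), satisfying the inequalities (BZ-1)' and the 3-term relations
(BZ-2)'. -/
def IsBZ (n : ℕ) (M : Finset ℕ → ℤ) : Prop :=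
  M ∅ = 0 ∧ M (Finset.Icc 1 (n + 1)) = 0 ∧
  (∀ i j : ℕ, ∀ K : Finset ℕ, 1 ≤ i → i ≤ n + 1 → 1 ≤ j → j ≤ n + 1 → i ≠ j →
    K ⊆ Finset.Icc 1 (n + 1) → i ∉ K → j ∉ K →
    M (insert i K) + M (insert j K) ≤ M (insert i (insert j K)) + M K) ∧
  (∀ i j k : ℕ, ∀ K : Finset ℕ, 1 ≤ i → i < j → j < k → k ≤ n + 1 →
    K ⊆ Finset.Icc 1 (n + 1) → i ∉ K → j ∉ K → k ∉ K →
    M (insert i (insert k K)) + M (insert j K) =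
      min (M (insert i (insert j K)) + M (insert k K))
        (M (insert j (insert k K)) + M (insert i K)))

/-- A `w₀`-BZ datum: a BZ datum with `M_{[n−i+2,n+1]} = 0` for all `1 ≤ i ≤ n`. -/
def IsW0BZ (n : ℕ) (M : Finset ℕ → ℤ) : Prop :=
  IsBZ n M ∧ ∀ i : ℕ, 1 ≤ i → i ≤ n → M (Finset.Icc (n - i + 2) (n + 1)) = 0

/-- An `e`-BZ datum: a BZ datum with `M_{[1,i]} = 0` for all `1 ≤ i ≤ n`. -/
def IsEBZ (n : ℕ) (M : Finset ℕ → ℤ) : Prop :=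
  IsBZ n M ∧ ∀ i : ℕ, 1 ≤ i → i ≤ n → M (Finset.Icc 1 i) = 0

/-!
Putting `L = I ∖ {i, j, …} ∖ K`, the complements of the sets occurring in (BZ-1)' or (BZ-2)' at `K`
are exactly the sets occurring in the same relation at `L`: taking complements only swaps the two
summands of every sum, so both relations are self-dual. Since the complement of the initial interval
`[1, i]` is the final interval `[i + 1, n + 1]`, complementation exchanges the two normalizations.
-/

/-- The family `M*` with `(M*)_K = M_{I ∖ K}`, for a family `M` indexed by the subsets of `I`. Since
families are modelled as total functions on finsets, their values at `K ⊄ I` carry no meaning. -/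
def complDatum {α R : Type*} [DecidableEq α] (I : Finset α) (M : Finset α → R) : Finset α → R :=
  fun K => M (I \ K)

/-- The inequalities (BZ-1)' for a family indexed by the subsets of a finite set `I`. -/
def ExchangeInequalities {α R : Type*} [DecidableEq α] [Add R] [LE R]
    (I : Finset α) (M : Finset α → R) : Prop :=
  ∀ ⦃i j : α⦄ ⦃K : Finset α⦄, i ∈ I → j ∈ I → i ≠ j → K ⊆ I → i ∉ K → j ∉ K →
    M (insert i K) + M (insert j K) ≤ M (insert i (insert j K)) + M K

/-- The 3-term relations (BZ-2)', also known as tropical Plücker relations, for a family indexed by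
the subsets of a finite subset `I` of a linear order. -/
def ThreeTermRelations {α R : Type*} [LinearOrder α] [Add R] [Min R]
    (I : Finset α) (M : Finset α → R) : Prop :=
  ∀ ⦃i j k : α⦄ ⦃K : Finset α⦄, i ∈ I → j ∈ I → k ∈ I → i < j → j < k → K ⊆ I →
    i ∉ K → j ∉ K → k ∉ K →
    M (insert i (insert k K)) + M (insert j K) =
      min (M (insert i (insert j K)) + M (insert k K))
        (M (insert j (insert k K)) + M (insert i K))

section Complementation

variable {α R : Type*} {I : Finset α}

theorem complDatum_complDatum_apply [DecidableEq α] (M : Finset α → R) {K : Finset α}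
    (hK : K ⊆ I) : complDatum I (complDatum I M) K = M K :=
  congrArg M (Finset.sdiff_sdiff_eq_self hK)

theorem ExchangeInequalities.compl [DecidableEq α] [AddCommMagma R] [LE R] {M : Finset α → R}
    (h : ExchangeInequalities I M) : ExchangeInequalities I (complDatum I M) := by
  intro i j K hi hj hij _ hiK hjK
  set L := I \ insert i (insert j K) with hL
  have insert_i : insert i L = I \ insert j K := by grind
  have insert_j : insert j L = I \ insert i K := by grind
  have insert_ij : insert i (insert j L) = I \ K := by grind
  have inequality_at_L := h (K := L) hi hj hij Finset.sdiff_subset (by simp [hL]) (by simp [hL])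
  rw [insert_ij, insert_i, insert_j] at inequality_at_L
  simpa only [complDatum, add_comm] using inequality_at_L

theorem ThreeTermRelations.compl [LinearOrder α] [AddCommMagma R] [Min R] {M : Finset α → R}
    (h : ThreeTermRelations I M) : ThreeTermRelations I (complDatum I M) := by
  intro i j k K hi hj hk hij hjk _ hiK hjK hkK
  set L := I \ insert i (insert j (insert k K)) with hL
  have insert_i : insert i L = I \ insert j (insert k K) := by grind
  have insert_j : insert j L = I \ insert i (insert k K) := by grind
  have insert_k : insert k L = I \ insert i (insert j K) := by grind
  have insert_ij : insert i (insert j L) = I \ insert k K := by grind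
  have insert_ik : insert i (insert k L) = I \ insert j K := by grind
  have insert_jk : insert j (insert k L) = I \ insert i K := by grind
  have relation_at_L := h (K := L) hi hj hk hij hjk Finset.sdiff_subset
    (by simp [hL]) (by simp [hL]) (by simp [hL])
  rw [insert_ij, insert_ik, insert_jk, insert_i, insert_j, insert_k] at relation_at_L
  simpa only [complDatum, add_comm] using relation_at_L

end Complementation

theorem Icc_sdiff_Icc_left {α : Type*} [LinearOrder α] [LocallyFiniteOrder α] {a b : α}
    (hab : a ≤ b) (c : α) : Finset.Icc a c \ Finset.Icc a b = Finset.Ioc b c := by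
  ext x
  simp only [Finset.mem_sdiff, Finset.mem_Icc, Finset.mem_Ioc]
  grind

section BZDatum

variable {n : ℕ} {M : Finset ℕ → ℤ}

theorem isBZ_iff :
    IsBZ n M ↔ M ∅ = 0 ∧ M (Finset.Icc 1 (n + 1)) = 0 ∧
      ExchangeInequalities (Finset.Icc 1 (n + 1)) M ∧
      ThreeTermRelations (Finset.Icc 1 (n + 1)) M := by
  simp only [ExchangeInequalities, ThreeTermRelations, Finset.mem_Icc]
  constructor
  · rintro ⟨hempty, hfull, hineq, hrel⟩
    exact ⟨hempty, hfull, fun i j K hi hj => hineq i j K hi.1 hi.2 hj.1 hj.2,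
      fun i j k K hi _ hk hij hjk => hrel i j k K hi.1 hij hjk hk.2⟩
  · rintro ⟨hempty, hfull, hineq, hrel⟩
    exact ⟨hempty, hfull, fun i j K hi hin hj hjn => hineq ⟨hi, hin⟩ ⟨hj, hjn⟩,
      fun i j k K hi hij hjk hk =>
        hrel ⟨hi, by omega⟩ ⟨by omega, by omega⟩ ⟨by omega, hk⟩ hij hjk⟩

theorem isW0BZ_iff :
    IsW0BZ n M ↔ IsBZ n M ∧ ∀ i, 1 ≤ i → i ≤ n → M (Finset.Ioc i (n + 1)) = 0 := by
  refine and_congr_right fun _ => ⟨fun h i hi hin => ?_, fun h i hi hin => ?_⟩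
  · have left_endpoint : n - (n + 1 - i) + 2 = i + 1 := by omega
    have hfinal := h (n + 1 - i) (by omega) (by omega)
    rwa [left_endpoint, Finset.Icc_add_one_left_eq_Ioc] at hfinal
  · have left_endpoint : n - i + 2 = n + 1 - i + 1 := by omega
    rw [left_endpoint, Finset.Icc_add_one_left_eq_Ioc]
    exact h (n + 1 - i) (by omega) (by omega)

theorem IsBZ.compl (h : IsBZ n M) : IsBZ n (complDatum (Finset.Icc 1 (n + 1)) M) := by
  obtain ⟨hempty, hfull, hineq, hrel⟩ := isBZ_iff.1 h
  exact isBZ_iff.2 ⟨by simpa [complDatum] using hfull, by simpa [complDatum] using hempty,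
    hineq.compl, hrel.compl⟩

theorem IsW0BZ.isEBZ_compl (h : IsW0BZ n M) :
    IsEBZ n (complDatum (Finset.Icc 1 (n + 1)) M) := by
  obtain ⟨hBZ, hfinal⟩ := isW0BZ_iff.1 h
  refine ⟨hBZ.compl, fun i hi hin => ?_⟩
  rw [complDatum, Icc_sdiff_Icc_left hi]
  exact hfinal i hi hin

theorem IsEBZ.isW0BZ_compl (h : IsEBZ n M) :
    IsW0BZ n (complDatum (Finset.Icc 1 (n + 1)) M) := by
  obtain ⟨hBZ, hinitial⟩ := h
  refine isW0BZ_iff.2 ⟨hBZ.compl, fun i hi hin => ?_⟩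
  have initial_subset : Finset.Icc 1 i ⊆ Finset.Icc 1 (n + 1) :=
    Finset.Icc_subset_Icc_right (by omega)
  rw [complDatum, ← Icc_sdiff_Icc_left hi, Finset.sdiff_sdiff_eq_self initial_subset]
  exact hinitial i hi hin

end BZDatum

/-- complementation `(M*)_K = M_{K^c}` (with `K^c = [1,n+1] ∖ K`) sends every
`w₀`-BZ datum to an `e`-BZ datum and every `e`-BZ datum to a `w₀`-BZ datum, and the two maps
are mutually inverse (on Maya diagrams `K ⊆ [1,n+1]`, i.e. on the actual data); hence `*`
is a bijection from `BZ^{w₀}` onto `BZ^e` whose inverse is given by the same formula. -/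
theorem stmt6 (n : ℕ) (hn : 1 ≤ n) :
    (∀ M : Finset ℕ → ℤ, IsW0BZ n M → IsEBZ n fun K => M (Finset.Icc 1 (n + 1) \ K)) ∧
    (∀ M : Finset ℕ → ℤ, IsEBZ n M → IsW0BZ n fun K => M (Finset.Icc 1 (n + 1) \ K)) ∧
    (∀ M : Finset ℕ → ℤ, ∀ K : Finset ℕ, K ⊆ Finset.Icc 1 (n + 1) →
      M (Finset.Icc 1 (n + 1) \ (Finset.Icc 1 (n + 1) \ K)) = M K) :=
  ⟨fun _ h => h.isEBZ_compl, fun _ h => h.isW0BZ_compl,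
    fun M _ hK => complDatum_complDatum_apply M hK⟩
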